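/- Let n ≥ 1, c > 0, 0 < η ≤ c/(48n), and let q_{i,c}(x) = q^c_{i,η}(ηx) be the rescaled frequency-truncated approximation of q_i(x) = Q_i(x)e^{−‖x‖²/2}. Then ‖q_{i,c} − q_i(η·)‖_{L^∞(ℝⁿ)} ≤ 36 e^{−72n²} and for every k, ‖∂_k q_{i,c} − η (∂_k q_i)(η·)‖_{L^∞(ℝⁿ)} ≤ 36 η e^{−72n²}. -/

import Mathlib

open scoped RealInnerProductSpace

noncomputable section

/-- The Fourier transform with the convention `F(f)(ξ) = ∫ e^{-i⟨x,ξ⟩} f(x) dx`. -/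
def Fn {n : ℕ} (f : EuclideanSpace ℝ (Fin n) → ℂ) (ξ : EuclideanSpace ℝ (Fin n)) : ℂ :=
  ∫ x : EuclideanSpace ℝ (Fin n), Complex.exp (-Complex.I * (⟪x, ξ⟫ : ℝ)) * f x

open MeasureTheory in
lemma gk_integrable (k : ℕ) : Integrable (fun x : ℝ => x ^ k * Real.exp (-x ^ 2 / 2)) := by
  have h := integrable_rpow_mul_exp_neg_mul_sq (b := 1 / 2) (by norm_num) (s := (k : ℝ))
    (by have : (0 : ℝ) ≤ k := Nat.cast_nonneg k
        linarith)
  refine h.congr (Filter.Eventually.of_forall fun x => ?_)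
  simp only [Real.rpow_natCast]
  congr 2
  ring

/-- one-dimensional Gaussian moments with character -/
def gk (k : ℕ) (t x : ℝ) : ℂ :=
  Complex.exp (-Complex.I * ((x * t : ℝ) : ℂ)) * ((x ^ k * Real.exp (-x ^ 2 / 2) : ℝ) : ℂ)

lemma norm_cexp_negI (s : ℝ) : ‖Complex.exp (-Complex.I * (s : ℂ))‖ = 1 := by
  rw [Complex.norm_exp]; simp

lemma norm_cexp_I (s : ℝ) : ‖Complex.exp (Complex.I * (s : ℂ))‖ = 1 := by
  rw [Complex.norm_exp]; simp

open MeasureTheory in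
lemma gk_int (k : ℕ) (t : ℝ) : Integrable (gk k t) := by
  refine (gk_integrable k).ofReal.bdd_mul (c := 1) ?_ ?_
  · exact Continuous.aestronglyMeasurable (by fun_prop)
  · exact Filter.Eventually.of_forall fun x => (norm_cexp_negI _).le

def hk (k : ℕ) (t : ℝ) : ℂ := ∫ x : ℝ, gk k t x

open MeasureTheory in
lemma hk_succ (k : ℕ) (t : ℝ) :
    hk (k + 1) t = (k : ℂ) * hk (k - 1) t - Complex.I * t * hk k t := by
  have hd : ∀ x : ℝ, HasDerivAt (gk k t)
      ((k : ℂ) * gk (k - 1) t x - Complex.I * t * gk k t x - gk (k + 1) t x) x := by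
    intro x
    have h1 : HasDerivAt (fun x : ℝ => Complex.exp (-Complex.I * ((x * t : ℝ) : ℂ)))
        (Complex.exp (-Complex.I * ((x * t : ℝ) : ℂ)) * (-Complex.I * ((1 * t : ℝ) : ℂ))) x :=
      ((((hasDerivAt_id x).mul_const t).ofReal_comp).const_mul (-Complex.I)).cexp
    have h2 : HasDerivAt (fun x : ℝ => x ^ k * Real.exp (-x ^ 2 / 2))
        ((k * x ^ (k - 1)) * Real.exp (-x ^ 2 / 2)
          + x ^ k * (Real.exp (-x ^ 2 / 2) * (-(2 * x) / 2))) x := by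
      refine (hasDerivAt_pow k x).mul ?_
      have := (((hasDerivAt_pow 2 x).neg).div_const 2).exp
      simpa using this
    have h3 := h1.mul h2.ofReal_comp
    refine h3.congr_deriv ?_
    simp only [gk]
    push_cast
    ring
  have h0 := integral_eq_zero_of_hasDerivAt_of_integrable hd
    ((((gk_int (k - 1) t).const_mul _).sub ((gk_int k t).const_mul _)).sub (gk_int (k + 1) t))
    (gk_int k t)
  have i1 : Integrable (fun x => (k : ℂ) * gk (k - 1) t x) := (gk_int (k - 1) t).const_mul _
  have i2 : Integrable (fun x => Complex.I * t * gk k t x) := (gk_int k t).const_mul _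
  have i3 : Integrable (fun x => (k : ℂ) * gk (k - 1) t x - Complex.I * t * gk k t x) := i1.sub i2
  rw [integral_sub i3 (gk_int (k + 1) t), integral_sub i1 i2,
    integral_const_mul, integral_const_mul] at h0
  unfold hk
  linear_combination -h0

lemma hk_zero (t : ℝ) : hk 0 t = ((Real.sqrt (2 * Real.pi) * Real.exp (-t ^ 2 / 2) : ℝ) : ℂ) := by
  have h := fourierIntegral_gaussian (b := ((1 / 2 : ℝ) : ℂ)) (by simp) (-(t : ℂ))
  have e : hk 0 t = ∫ (x : ℝ), Complex.exp (Complex.I * (-(t : ℂ)) * ↑x)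
      * Complex.exp (-((1 / 2 : ℝ) : ℂ) * ↑x ^ 2) := by
    unfold hk gk
    congr 1
    ext x
    push_cast
    rw [pow_zero, one_mul]
    congr 2 <;> ring
  rw [e, h, Real.sqrt_eq_rpow]
  push_cast
  rw [Complex.ofReal_cpow (by positivity)]
  push_cast
  congr 2 <;> ring_nf

lemma hk_norm_zero (t : ℝ) : ‖hk 0 t‖ = Real.sqrt (2 * Real.pi) * Real.exp (-t ^ 2 / 2) := by
  rw [hk_zero, Complex.norm_real, Real.norm_of_nonneg (by positivity)]

lemma hk_two (t : ℝ) : hk 2 t = ((1 - t ^ 2 : ℝ) : ℂ) * hk 0 t := by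
  have h1 := hk_succ 0 t
  have h2 := hk_succ 1 t
  simp only [zero_add, Nat.reduceAdd, Nat.cast_zero, Nat.cast_one, Nat.sub_self] at h1 h2
  rw [h2, h1]
  push_cast
  linear_combination (t : ℂ) ^ 2 * hk 0 t * Complex.I_sq

lemma hk_four (t : ℝ) : hk 4 t = ((t ^ 4 - 6 * t ^ 2 + 3 : ℝ) : ℂ) * hk 0 t := by
  have h1 := hk_succ 0 t
  have h3 := hk_succ 2 t
  have h4 := hk_succ 3 t
  simp only [zero_add, Nat.reduceAdd, Nat.cast_zero, Nat.reduceSub] at h1 h3 h4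
  rw [h4, h3, h1, hk_two]
  push_cast
  linear_combination ((t : ℂ) ^ 2 * hk 0 t * (3 - t ^ 2)) * Complex.I_sq

lemma hk_bound (b : ℕ) (hb : b ≤ 2) (t B : ℝ) (hB : 3 + t ^ 2 ≤ B) :
    ‖hk (2 * b) t‖ ≤ (Real.sqrt (2 * Real.pi) * Real.exp (-t ^ 2 / 2)) * B ^ b := by
  have hs := sq_nonneg t
  rw [← hk_norm_zero]
  have hp : ∀ p : ℝ, |p| ≤ B ^ b → ‖((p : ℝ) : ℂ) * hk 0 t‖ ≤ ‖hk 0 t‖ * B ^ b := by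
    intro p h
    rw [norm_mul, Complex.norm_real, mul_comm, Real.norm_eq_abs]
    gcongr
  interval_cases b
  · simp
  · rw [show 2 * 1 = 2 from rfl, hk_two]
    apply hp
    rw [abs_le]; constructor <;> nlinarith
  · rw [show 2 * 2 = 4 from rfl, hk_four]
    apply hp
    have : (3 + t ^ 2) ^ 2 ≤ B ^ 2 := by gcongr
    rw [abs_le]; constructor <;> nlinarith

/-- monomial times Gaussian -/
def Mb {n : ℕ} (b : Fin n → ℕ) (x : EuclideanSpace ℝ (Fin n)) : ℝ :=
  ∏ l, (x l ^ (2 * b l) * Real.exp (-(x l) ^ 2 / 2))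

open MeasureTheory in
lemma Mb_int {n : ℕ} (b : Fin n → ℕ) : Integrable (Mb b) := by
  rw [← (PiLp.volume_preserving_toLp (Fin n)).integrable_comp_emb
    (MeasurableEquiv.toLp 2 _).measurableEmbedding]
  exact Integrable.fintype_prod (f := fun l (v : ℝ) => v ^ (2 * b l) * Real.exp (-v ^ 2 / 2))
    (fun l => gk_integrable _)

open MeasureTheory in
lemma Fn_Mb {n : ℕ} (b : Fin n → ℕ) (ξ : EuclideanSpace ℝ (Fin n)) :
    Fn (fun y => (Mb b y : ℂ)) ξ = ∏ l, hk (2 * b l) (ξ l) := by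
  unfold Fn hk
  rw [← integral_fintype_prod_volume_eq_prod (fun l => gk (2 * b l) (ξ l)),
    ← (PiLp.volume_preserving_toLp (Fin n)).integral_comp
    (MeasurableEquiv.toLp 2 _).measurableEmbedding]
  congr 1
  ext x
  simp only [gk, Mb]
  rw [Finset.prod_mul_distrib (f := fun i => Complex.exp (-Complex.I * ((x i * ξ i : ℝ) : ℂ))),
    ← Complex.exp_sum, ← Finset.mul_sum]
  push_cast
  congr 3
  simp [PiLp.inner_apply, mul_comm]

lemma Fn_Mb_bound {n : ℕ} (b : Fin n → ℕ) (hb : ∀ l, b l ≤ 2) (ξ : EuclideanSpace ℝ (Fin n)) :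
    ‖Fn (fun y => (Mb b y : ℂ)) ξ‖ ≤
      (Real.sqrt (2 * Real.pi) ^ n * Real.exp (-‖ξ‖ ^ 2 / 2)) * (3 + ‖ξ‖ ^ 2) ^ (∑ l, b l) := by
  rw [Fn_Mb, norm_prod]
  have hn : ‖ξ‖ ^ 2 = ∑ l, ξ l ^ 2 := EuclideanSpace.real_norm_sq_eq ξ
  calc ∏ l, ‖hk (2 * b l) (ξ l)‖
      ≤ ∏ l, ((Real.sqrt (2 * Real.pi) * Real.exp (-(ξ l) ^ 2 / 2)) * (3 + ‖ξ‖ ^ 2) ^ (b l)) := by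
        refine Finset.prod_le_prod (fun l _ => norm_nonneg _) fun l _ => hk_bound _ (hb l) _ _ ?_
        rw [hn]
        have := Finset.single_le_sum (f := fun l => ξ l ^ 2) (fun l _ => sq_nonneg _)
          (Finset.mem_univ l)
        simpa using this
    _ = _ := by
        rw [Finset.prod_mul_distrib, Finset.prod_mul_distrib, Finset.prod_pow_eq_pow_sum,
          ← Real.exp_sum, Finset.prod_const, Finset.card_univ, Fintype.card_fin, hn,
          ← Finset.sum_div, Finset.sum_neg_distrib]

lemma Mb_zero {n : ℕ} (x : EuclideanSpace ℝ (Fin n)) :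
    Mb 0 x = Real.exp (-‖x‖ ^ 2 / 2) := by
  simp only [Mb, EuclideanSpace.real_norm_sq_eq, Pi.zero_apply, mul_zero, pow_zero, one_mul]
  rw [← Real.exp_sum, ← Finset.sum_div, Finset.sum_neg_distrib]

lemma Mb_add {n : ℕ} (b : Fin n → ℕ) (j : Fin n) (x : EuclideanSpace ℝ (Fin n)) :
    Mb (b + Pi.single j 1) x = x j ^ 2 * Mb b x := by
  simp only [Mb, Pi.add_apply, mul_add, pow_add]
  simp only [Finset.prod_mul_distrib]
  have : ∏ l, x l ^ (2 * (Pi.single j 1 : Fin n → ℕ) l) = x j ^ 2 := by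
    rw [Finset.prod_eq_single j]
    · simp
    · intro l _ h
      simp [h]
    · simp
  rw [this]; ring

def Ai (n i : ℕ) : Finset (Fin n) := Finset.univ.filter (fun j : Fin n => (j : ℕ) < i + 1)
def Bi (n i : ℕ) : Finset (Fin n) := Finset.univ.filter (fun j : Fin n => i + 1 ≤ (j : ℕ))

def qq (n i : ℕ) (p : EuclideanSpace ℝ (Fin n)) : ℝ :=
  (((∑ j ∈ Ai n i, p j ^ 2) - 2) ^ 2 + (∑ j ∈ Bi n i, p j ^ 2) - 1) * Real.exp (-‖p‖ ^ 2 / 2)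

lemma qq_eq (n i : ℕ) (p : EuclideanSpace ℝ (Fin n)) :
    qq n i p = (∑ j ∈ Ai n i, ∑ k ∈ Ai n i, Mb (0 + Pi.single j 1 + Pi.single k 1) p)
      - 4 * (∑ j ∈ Ai n i, Mb (0 + Pi.single j 1) p)
      + (∑ j ∈ Bi n i, Mb (0 + Pi.single j 1) p) + 3 * Mb 0 p := by
  simp only [Mb_add, Mb_zero, qq, ← mul_assoc, ← Finset.sum_mul]
  simp only [← Finset.mul_sum]
  ring

open MeasureTheory in
lemma qq_int (n i : ℕ) : Integrable (qq n i) := by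
  have : qq n i = _ := funext (qq_eq n i)
  rw [this]
  refine (((integrable_finsetSum _ fun j _ => integrable_finsetSum _ fun k _ => Mb_int _).sub
    ((integrable_finsetSum _ fun j _ => Mb_int _).const_mul _)).add
    (integrable_finsetSum _ fun j _ => Mb_int _)).add ((Mb_int _).const_mul _)

open MeasureTheory in
lemma Fn_integrand {n : ℕ} {f : EuclideanSpace ℝ (Fin n) → ℝ} (hf : Integrable f)
    (ξ : EuclideanSpace ℝ (Fin n)) :
    Integrable (fun x => Complex.exp (-Complex.I * (⟪x, ξ⟫ : ℝ)) * (f x : ℂ)) := by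
  refine hf.ofReal.bdd_mul (c := 1) ?_ ?_
  · exact Continuous.aestronglyMeasurable (by fun_prop)
  · exact Filter.Eventually.of_forall fun x => (norm_cexp_negI _).le

open MeasureTheory in
lemma Fn_add {n : ℕ} {f g : EuclideanSpace ℝ (Fin n) → ℝ} (hf : Integrable f) (hg : Integrable g)
    (ξ : EuclideanSpace ℝ (Fin n)) : Fn (fun y => ((f y + g y : ℝ) : ℂ)) ξ =
      Fn (fun y => (f y : ℂ)) ξ + Fn (fun y => (g y : ℂ)) ξ := by
  unfold Fn
  rw [← integral_add (Fn_integrand hf ξ) (Fn_integrand hg ξ)]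
  congr 1; ext x; push_cast; ring

open MeasureTheory in
lemma Fn_smul {n : ℕ} (a : ℝ) (f : EuclideanSpace ℝ (Fin n) → ℝ)
    (ξ : EuclideanSpace ℝ (Fin n)) : Fn (fun y => ((a * f y : ℝ) : ℂ)) ξ =
      a * Fn (fun y => (f y : ℂ)) ξ := by
  unfold Fn
  rw [← integral_const_mul]
  congr 1; ext x; push_cast; ring

open MeasureTheory in
lemma Fn_sum {n : ℕ} {ι : Type*} (s : Finset ι) (f : ι → EuclideanSpace ℝ (Fin n) → ℝ)
    (hf : ∀ j, Integrable (f j)) (ξ : EuclideanSpace ℝ (Fin n)) :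
    Fn (fun y => ((∑ j ∈ s, f j y : ℝ) : ℂ)) ξ = ∑ j ∈ s, Fn (fun y => (f j y : ℂ)) ξ := by
  unfold Fn
  rw [← integral_finsetSum _ (fun j _ => Fn_integrand (hf j) ξ)]
  congr 1; ext x; push_cast; rw [Finset.mul_sum]

open MeasureTheory in
lemma Fn_qq_bound (n i : ℕ) (hn : 1 ≤ n) (ξ : EuclideanSpace ℝ (Fin n)) :
    ‖Fn (fun y => (qq n i y : ℂ)) ξ‖ ≤
      (Real.sqrt (2 * Real.pi) ^ n * Real.exp (-‖ξ‖ ^ 2 / 2)) *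
        (3 * n ^ 2 * (3 + ‖ξ‖ ^ 2) ^ 2) := by
  set K := Real.sqrt (2 * Real.pi) ^ n * Real.exp (-‖ξ‖ ^ 2 / 2) with hK
  set B := 3 + ‖ξ‖ ^ 2 with hB
  have hK0 : 0 ≤ K := by positivity
  have hB3 : 3 ≤ B := by rw [hB]; nlinarith [sq_nonneg ‖ξ‖]
  have hn1 : (1 : ℝ) ≤ n := by exact_mod_cast hn
  have e : Fn (fun y => (qq n i y : ℂ)) ξ =
      (∑ j ∈ Ai n i, ∑ k ∈ Ai n i, Fn (fun y => (Mb (0 + Pi.single j 1 + Pi.single k 1) y : ℂ)) ξ)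
      + ((-4 : ℝ) : ℂ) * (∑ j ∈ Ai n i, Fn (fun y => (Mb (0 + Pi.single j 1) y : ℂ)) ξ)
      + (∑ j ∈ Bi n i, Fn (fun y => (Mb (0 + Pi.single j 1) y : ℂ)) ξ)
      + ((3 : ℝ) : ℂ) * Fn (fun y => (Mb 0 y : ℂ)) ξ := by
    have : qq n i = fun p => (∑ j ∈ Ai n i, ∑ k ∈ Ai n i, Mb (0 + Pi.single j 1 + Pi.single k 1) p)
      + (-4) * (∑ j ∈ Ai n i, Mb (0 + Pi.single j 1) p)
      + (∑ j ∈ Bi n i, Mb (0 + Pi.single j 1) p) + 3 * Mb 0 p := by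
      ext p; rw [qq_eq]; ring
    rw [this]
    have I1 : Integrable (fun p : EuclideanSpace ℝ (Fin n) =>
        ∑ j ∈ Ai n i, ∑ k ∈ Ai n i, Mb (0 + Pi.single j 1 + Pi.single k 1) p) :=
      integrable_finsetSum _ fun j _ => integrable_finsetSum _ fun k _ => Mb_int _
    have I2 : Integrable (fun p : EuclideanSpace ℝ (Fin n) =>
        ∑ j ∈ Ai n i, Mb (0 + Pi.single j 1) p) :=
      integrable_finsetSum _ fun j _ => Mb_int _
    have I3 : Integrable (fun p : EuclideanSpace ℝ (Fin n) =>
        ∑ j ∈ Bi n i, Mb (0 + Pi.single j 1) p) :=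
      integrable_finsetSum _ fun j _ => Mb_int _
    have I4 : Integrable (fun p : EuclideanSpace ℝ (Fin n) =>
        (∑ j ∈ Ai n i, ∑ k ∈ Ai n i, Mb (0 + Pi.single j 1 + Pi.single k 1) p)
        + (-4) * (∑ j ∈ Ai n i, Mb (0 + Pi.single j 1) p)) := I1.add (I2.const_mul (-4))
    have I5 : Integrable (fun p : EuclideanSpace ℝ (Fin n) =>
        (∑ j ∈ Ai n i, ∑ k ∈ Ai n i, Mb (0 + Pi.single j 1 + Pi.single k 1) p)
        + (-4) * (∑ j ∈ Ai n i, Mb (0 + Pi.single j 1) p)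
        + (∑ j ∈ Bi n i, Mb (0 + Pi.single j 1) p)) := I4.add I3
    rw [Fn_add I5 ((Mb_int 0).const_mul 3), Fn_add I4 I3, Fn_add I1 (I2.const_mul (-4)),
      Fn_smul, Fn_smul, Fn_sum _ _ (fun j => Mb_int _), Fn_sum _ _ (fun j => Mb_int _),
      Fn_sum _ _ (fun j => integrable_finsetSum _ fun k _ => Mb_int _)]
    simp only [Fn_sum _ _ (fun j => Mb_int _)]
  have cA : ((Ai n i).card : ℝ) ≤ n := by
    have := Finset.card_le_univ (Ai n i)
    rw [Fintype.card_fin] at this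
    exact_mod_cast this
  have cAB : ((Ai n i).card : ℝ) + (Bi n i).card = n := by
    have h := Finset.card_filter_add_card_filter_not (s := (Finset.univ : Finset (Fin n)))
      (fun j : Fin n => (j : ℕ) < i + 1)
    simp only [not_lt, Finset.card_univ, Fintype.card_fin] at h
    exact_mod_cast h
  have b1 : ∀ j, ‖Fn (fun y => (Mb (0 + Pi.single j 1) y : ℂ)) ξ‖ ≤ K * B := by
    intro j
    have := Fn_Mb_bound (0 + Pi.single j 1) (fun l => by
      simp only [zero_add, Pi.single_apply]; split_ifs <;> norm_num) ξ
    simpa [hK, hB] using this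
  have b2 : ∀ j k, ‖Fn (fun y => (Mb (0 + Pi.single j 1 + Pi.single k 1) y : ℂ)) ξ‖
      ≤ K * B ^ 2 := by
    intro j k
    have := Fn_Mb_bound (0 + Pi.single j 1 + Pi.single k 1) (fun l => by
      simp only [zero_add, Pi.add_apply, Pi.single_apply]; split_ifs <;> norm_num) ξ
    simpa [hK, hB, Finset.sum_add_distrib] using this
  have b0 : ‖Fn (fun y => (Mb 0 y : ℂ)) ξ‖ ≤ K := by
    have := Fn_Mb_bound 0 (fun l => by simp) ξ
    simpa [hK] using this
  have s1 : ∀ s : Finset (Fin n), ‖∑ j ∈ s, Fn (fun y => (Mb (0 + Pi.single j 1) y : ℂ)) ξ‖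
      ≤ s.card * (K * B) := by
    intro s
    refine (norm_sum_le_of_le s (fun j _ => b1 j)).trans ?_
    simp
  have s2 : ‖∑ j ∈ Ai n i, ∑ k ∈ Ai n i,
      Fn (fun y => (Mb (0 + Pi.single j 1 + Pi.single k 1) y : ℂ)) ξ‖
      ≤ (Ai n i).card * ((Ai n i).card * (K * B ^ 2)) := by
    refine (norm_sum_le_of_le _ (fun j _ => norm_sum_le_of_le _ (fun k _ => b2 j k))).trans ?_
    simp
  rw [e]
  have n4 : ‖((-4 : ℝ) : ℂ)‖ = 4 := by rw [Complex.norm_real]; norm_num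
  have n3 : ‖((3 : ℝ) : ℂ)‖ = 3 := by rw [Complex.norm_real]; norm_num
  refine (norm_add_le _ _).trans ((add_le_add_left (norm_add_le _ _) _).trans
    ((add_le_add_left (add_le_add_left (norm_add_le _ _) _) _).trans ?_))
  rw [norm_mul, norm_mul, n4, n3]
  have hA0 : (0 : ℝ) ≤ (Ai n i).card := Nat.cast_nonneg _
  have hB0 : (0 : ℝ) ≤ (Bi n i).card := Nat.cast_nonneg _
  have t1 := s1 (Ai n i)
  have t2 := s1 (Bi n i)
  have u1 : ((Ai n i).card : ℝ) * ((Ai n i).card * (K * B ^ 2)) ≤ n * (n * (K * B ^ 2)) := by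
    gcongr
  have hKB : 0 ≤ K * B := by positivity
  have u2 : 4 * ((Ai n i).card * (K * B)) + (Bi n i).card * (K * B) ≤ 4 * n * (K * B) := by
    rw [← cAB]; nlinarith [mul_nonneg hB0 hKB]
  have u3 : n * (n * B ^ 2) + 4 * n * B + 3 ≤ 3 * (n : ℝ) ^ 2 * B ^ 2 := by
    have : 3 ≤ n * B := by nlinarith
    nlinarith
  nlinarith [mul_le_mul_of_nonneg_left u3 hK0]

lemma poly_exp_bound (r a : ℝ) (ha : 3 ≤ a) (hr : 0 ≤ r) :
    (3 + r ^ 2) ^ 2 * (1 + r) ≤ a ^ 3 * Real.exp (3 * r ^ 2 / a) := by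
  have h1 : 1 + r ≤ 3 + r ^ 2 := by nlinarith [sq_nonneg (r - 1)]
  have h2 : 3 + r ^ 2 ≤ a * Real.exp (r ^ 2 / a) := by
    have := Real.add_one_le_exp (r ^ 2 / a)
    have h3 : a * (r ^ 2 / a + 1) ≤ a * Real.exp (r ^ 2 / a) := by gcongr
    have h4 : a * (r ^ 2 / a + 1) = r ^ 2 + a := by field_simp
    linarith
  have e : a ^ 3 * Real.exp (3 * r ^ 2 / a) = (a * Real.exp (r ^ 2 / a)) ^ 3 := by
    rw [mul_pow, ← Real.exp_nat_mul]
    congr 2; push_cast; ring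
  rw [e]
  calc (3 + r ^ 2) ^ 2 * (1 + r) ≤ (3 + r ^ 2) ^ 2 * (3 + r ^ 2) := by gcongr
    _ = (3 + r ^ 2) ^ 3 := by ring
    _ ≤ _ := by gcongr

lemma num_bound (n : ℕ) (hn : 1 ≤ n) (r : ℝ) (hr : 24 * n ≤ r) :
    3 * n ^ 2 * (3 + r ^ 2) ^ 2 * (1 + r) * Real.exp (-r ^ 2 / 2) * Real.sqrt 2 ^ n ≤
      36 * Real.exp (-72 * (n : ℝ) ^ 2) * Real.exp (-(1 / 4) * r ^ 2) := by
  have hn1 : (1 : ℝ) ≤ n := by exact_mod_cast hn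
  have hr0 : 0 ≤ r := by linarith
  have h1 := poly_exp_bound r 36 (by norm_num) hr0
  have h2 : (n : ℝ) ^ 2 ≤ Real.exp ((n : ℝ) ^ 2) := by
    have := Real.add_one_le_exp ((n : ℝ) ^ 2); linarith
  have e1 : (2 : ℝ) ≤ Real.exp 1 := by have := Real.add_one_le_exp (1 : ℝ); linarith
  have h3 : Real.sqrt 2 ^ n ≤ Real.exp ((n : ℝ) ^ 2) := by
    have : Real.sqrt 2 ≤ Real.exp 1 := by
      refine le_trans ?_ e1
      rw [Real.sqrt_le_left (by norm_num)]; norm_num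
    calc Real.sqrt 2 ^ n ≤ Real.exp 1 ^ n := by gcongr
      _ = Real.exp n := by rw [← Real.exp_nat_mul, mul_one]
      _ ≤ _ := by apply Real.exp_le_exp.2; nlinarith
  have h4 : (3888 : ℝ) ≤ Real.exp (12 * (n : ℝ) ^ 2) := by
    calc (3888 : ℝ) ≤ 2 ^ 12 := by norm_num
      _ ≤ Real.exp 1 ^ 12 := by gcongr
      _ = Real.exp 12 := by rw [← Real.exp_nat_mul]; norm_num
      _ ≤ _ := by apply Real.exp_le_exp.2; nlinarith
  have hsq : 576 * (n : ℝ) ^ 2 ≤ r ^ 2 := by nlinarith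
  calc 3 * n ^ 2 * (3 + r ^ 2) ^ 2 * (1 + r) * Real.exp (-r ^ 2 / 2) * Real.sqrt 2 ^ n
      = 3 * ((n : ℝ) ^ 2 * ((3 + r ^ 2) ^ 2 * (1 + r)) * Real.sqrt 2 ^ n)
        * Real.exp (-r ^ 2 / 2) := by ring
    _ ≤ 3 * (Real.exp ((n : ℝ) ^ 2) * (36 ^ 3 * Real.exp (3 * r ^ 2 / 36))
        * Real.exp ((n : ℝ) ^ 2)) * Real.exp (-r ^ 2 / 2) := by gcongr
    _ = 36 * (3888 * (Real.exp ((n : ℝ) ^ 2) * Real.exp (3 * r ^ 2 / 36)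
        * Real.exp ((n : ℝ) ^ 2) * Real.exp (-r ^ 2 / 2))) := by ring
    _ ≤ 36 * (Real.exp (12 * (n : ℝ) ^ 2) * (Real.exp ((n : ℝ) ^ 2) * Real.exp (3 * r ^ 2 / 36)
        * Real.exp ((n : ℝ) ^ 2) * Real.exp (-r ^ 2 / 2))) := by gcongr
    _ ≤ 36 * (Real.exp (-72 * (n : ℝ) ^ 2) * Real.exp (-(1 / 4) * r ^ 2)) := by
      simp only [← Real.exp_add]
      refine mul_le_mul_of_nonneg_left (Real.exp_le_exp.2 ?_) (by norm_num)
      nlinarith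
    _ = _ := by ring

lemma qq_contDiff (n i : ℕ) : ContDiff ℝ 1 (qq n i) := by
  unfold qq
  have hc : ∀ j : Fin n, ContDiff ℝ 1 (fun p : EuclideanSpace ℝ (Fin n) => p j) := fun j =>
    (EuclideanSpace.proj (𝕜 := ℝ) j).contDiff
  have hS : ∀ s : Finset (Fin n),
      ContDiff ℝ 1 (fun p : EuclideanSpace ℝ (Fin n) => ∑ j ∈ s, p j ^ 2) := fun s =>
    ContDiff.sum fun j _ => (hc j).pow 2
  have hN : ContDiff ℝ 1 (fun p : EuclideanSpace ℝ (Fin n) => ‖p‖ ^ 2) := contDiff_norm_sq ℝ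
  exact (((((hS _).sub contDiff_const).pow 2).add (hS _)).sub contDiff_const).mul
    ((hN.neg.div_const 2).exp)

open MeasureTheory in
lemma Fn_cont {n : ℕ} {f : EuclideanSpace ℝ (Fin n) → ℝ} (hf : Integrable f) :
    Continuous (Fn (fun y => (f y : ℂ))) := by
  unfold Fn
  refine continuous_of_dominated (bound := fun x => ‖f x‖)
    (fun ξ => (Fn_integrand hf ξ).aestronglyMeasurable) ?_ hf.norm ?_
  · intro ξ
    refine Filter.Eventually.of_forall fun x => ?_
    rw [norm_mul, norm_cexp_negI, one_mul, Complex.norm_real]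
  · refine Filter.Eventually.of_forall fun x => ?_
    fun_prop

open MeasureTheory in
lemma gauss_int (n : ℕ) : Integrable (fun ξ : EuclideanSpace ℝ (Fin n) =>
    Real.exp (-(1 / 4) * ‖ξ‖ ^ 2)) := by
  have h := (GaussianFourier.integrable_cexp_neg_mul_sq_norm_add (b := ((1 / 4 : ℝ) : ℂ))
    (V := EuclideanSpace ℝ (Fin n)) (by simp) 0 0).re
  refine h.congr (Filter.Eventually.of_forall fun x => ?_)
  have : (-((1 / 4 : ℝ) : ℂ) * (‖x‖ : ℂ) ^ 2 + 0 * ((inner ℝ 0 x : ℝ) : ℂ))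
    = ((-(1 / 4) * ‖x‖ ^ 2 : ℝ) : ℂ) := by push_cast; ring
  simp only [this, ← Complex.ofReal_exp]
  exact Complex.ofReal_re _

open MeasureTheory in
lemma gauss_val (n : ℕ) : ∫ ξ : EuclideanSpace ℝ (Fin n), Real.exp (-(1 / 4) * ‖ξ‖ ^ 2) =
    Real.sqrt 2 ^ n * Real.sqrt (2 * Real.pi) ^ n := by
  rw [GaussianFourier.integral_rexp_neg_mul_sq_norm (by norm_num), ← mul_pow,
    ← Real.sqrt_mul (by norm_num), finrank_euclideanSpace, Fintype.card_fin,
    Real.sqrt_eq_rpow, ← Real.rpow_natCast, ← Real.rpow_mul (by positivity)]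
  congr 1 <;> ring

open MeasureTheory in
lemma Fn_qq_weight_le (n i : ℕ) (hn : 1 ≤ n) (ξ : EuclideanSpace ℝ (Fin n)) :
    ‖Fn (fun y => (qq n i y : ℂ)) ξ‖ * (1 + ‖ξ‖) ≤
      (Real.sqrt (2 * Real.pi) ^ n * (3 * n ^ 2) * 12 ^ 3) * Real.exp (-(1 / 4) * ‖ξ‖ ^ 2) := by
  have h1 := Fn_qq_bound n i hn ξ
  have h2 := poly_exp_bound ‖ξ‖ 12 (by norm_num) (norm_nonneg _)
  calc _ ≤ ((Real.sqrt (2 * Real.pi) ^ n * Real.exp (-‖ξ‖ ^ 2 / 2)) *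
        (3 * n ^ 2 * (3 + ‖ξ‖ ^ 2) ^ 2)) * (1 + ‖ξ‖) := by gcongr
    _ = (Real.sqrt (2 * Real.pi) ^ n * (3 * n ^ 2)) * Real.exp (-‖ξ‖ ^ 2 / 2) *
        ((3 + ‖ξ‖ ^ 2) ^ 2 * (1 + ‖ξ‖)) := by ring
    _ ≤ (Real.sqrt (2 * Real.pi) ^ n * (3 * n ^ 2)) * Real.exp (-‖ξ‖ ^ 2 / 2) *
        (12 ^ 3 * Real.exp (3 * ‖ξ‖ ^ 2 / 12)) := by gcongr
    _ = (Real.sqrt (2 * Real.pi) ^ n * (3 * n ^ 2) * 12 ^ 3) *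
        (Real.exp (-‖ξ‖ ^ 2 / 2) * Real.exp (3 * ‖ξ‖ ^ 2 / 12)) := by ring
    _ = _ := by rw [← Real.exp_add]; congr 2; ring

open MeasureTheory in
lemma Fn_qq_int (n i : ℕ) (hn : 1 ≤ n) : Integrable (Fn (fun y => (qq n i y : ℂ))) := by
  refine ((gauss_int n).const_mul (Real.sqrt (2 * Real.pi) ^ n * (3 * n ^ 2) * 12 ^ 3)).mono'
    (Fn_cont (qq_int n i)).aestronglyMeasurable (Filter.Eventually.of_forall fun ξ => ?_)
  refine le_trans ?_ (Fn_qq_weight_le n i hn ξ)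
  nlinarith [norm_nonneg ξ, norm_nonneg (Fn (fun y => (qq n i y : ℂ)) ξ),
    mul_nonneg (norm_nonneg (Fn (fun y => (qq n i y : ℂ)) ξ)) (norm_nonneg ξ)]

open MeasureTheory FourierTransform in
lemma qq_inversion (n i : ℕ) (hn : 1 ≤ n) (z : EuclideanSpace ℝ (Fin n)) :
    (qq n i z : ℂ) = (1 / (2 * Real.pi) ^ n) * ∫ ξ : EuclideanSpace ℝ (Fin n),
      Fn (fun y => (qq n i y : ℂ)) ξ * Complex.exp (Complex.I * (⟪z, ξ⟫ : ℝ)) := by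
  set f : EuclideanSpace ℝ (Fin n) → ℂ := fun y => (qq n i y : ℂ) with hf
  have hF : 𝓕 f = fun w => Fn f ((2 * Real.pi) • w) := by
    ext w
    rw [Real.fourier_eq']
    unfold Fn
    congr 1
    ext x
    rw [smul_eq_mul, real_inner_smul_right]
    congr 2
    push_cast
    ring
  have hcont : Continuous f := Complex.continuous_ofReal.comp (qq_contDiff n i).continuous
  have hint : Integrable f := (qq_int n i).ofReal
  have hFint : Integrable (𝓕 f) := by
    rw [hF]
    exact (Fn_qq_int n i hn).comp_smul (by positivity)
  have h := congrFun (hcont.fourierInv_fourier_eq hint hFint) z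
  rw [hF, Real.fourierInv_eq'] at h
  have h2 := Measure.integral_comp_smul (volume : Measure (EuclideanSpace ℝ (Fin n)))
    (fun ξ => Fn f ξ * Complex.exp (Complex.I * (⟪z, ξ⟫ : ℝ))) (2 * Real.pi)
  have h3 : ∀ v : EuclideanSpace ℝ (Fin n),
      Complex.exp (((2 * Real.pi * inner ℝ v z : ℝ) : ℂ) * Complex.I) • Fn f ((2 * Real.pi) • v) =
      Fn f ((2 * Real.pi) • v) * Complex.exp (Complex.I * (⟪z, (2 * Real.pi) • v⟫ : ℝ)) := by
    intro v
    rw [smul_eq_mul, real_inner_smul_right, real_inner_comm, mul_comm]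
    congr 2
    push_cast
    ring
  simp only [h3] at h
  rw [h2] at h
  change _ = f z at h
  change f z = _
  rw [← h, finrank_euclideanSpace, Fintype.card_fin, abs_of_nonneg (by positivity),
    Complex.real_smul]
  push_cast
  rw [one_div]

open MeasureTheory in
/-- Generic estimate for `z ↦ ∫ f(ξ) e^{i⟨z,ξ⟩} dξ`. -/
lemma osc_deriv {n : ℕ} (f : EuclideanSpace ℝ (Fin n) → ℂ) (hf : Continuous f)
    (W : EuclideanSpace ℝ (Fin n) → ℝ) (hW : Integrable W)
    (hfW : ∀ ξ, ‖f ξ‖ * (1 + ‖ξ‖) ≤ W ξ) (z : EuclideanSpace ℝ (Fin n)) :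
    ‖∫ ξ, f ξ * Complex.exp (Complex.I * (⟪z, ξ⟫ : ℝ))‖ ≤ ∫ ξ, W ξ ∧
    ∃ D : EuclideanSpace ℝ (Fin n) →L[ℝ] ℂ, ‖D‖ ≤ ∫ ξ, W ξ ∧
      HasFDerivAt (fun z => ∫ ξ, f ξ * Complex.exp (Complex.I * (⟪z, ξ⟫ : ℝ))) D z := by
  have b0 : ∀ ξ, ‖f ξ‖ ≤ W ξ := fun ξ => by
    nlinarith [hfW ξ, mul_nonneg (norm_nonneg (f ξ)) (norm_nonneg ξ)]
  have b1 : ∀ ξ, ‖f ξ‖ * ‖ξ‖ ≤ W ξ := fun ξ => by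
    nlinarith [hfW ξ, norm_nonneg (f ξ)]
  have bz : ∀ z ξ : EuclideanSpace ℝ (Fin n),
      ‖f ξ * Complex.exp (Complex.I * (⟪z, ξ⟫ : ℝ))‖ ≤ W ξ := by
    intro z ξ
    rw [norm_mul, norm_cexp_I, mul_one]; exact b0 ξ
  have cz : ∀ z : EuclideanSpace ℝ (Fin n),
      Continuous (fun ξ => f ξ * Complex.exp (Complex.I * (⟪z, ξ⟫ : ℝ))) := by
    intro z; fun_prop
  refine ⟨norm_integral_le_of_norm_le hW (Filter.Eventually.of_forall (bz z)), ?_⟩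
  let L : EuclideanSpace ℝ (Fin n) → EuclideanSpace ℝ (Fin n) →L[ℝ] ℂ :=
    fun ξ => Complex.ofRealCLM.comp (innerSL ℝ ξ)
  have hLc : Continuous L := by
    have : Continuous (fun ξ : EuclideanSpace ℝ (Fin n) => innerSL ℝ ξ) :=
      (innerSL ℝ : EuclideanSpace ℝ (Fin n) →L⋆[ℝ] _).continuous
    exact continuous_const.clm_comp this
  have hLn : ∀ ξ, ‖L ξ‖ ≤ ‖ξ‖ := by
    intro ξ
    refine ContinuousLinearMap.opNorm_le_bound _ (norm_nonneg _) fun v => ?_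
    simp only [L, ContinuousLinearMap.comp_apply, innerSL_apply_apply, Complex.ofRealCLM_apply,
      Complex.norm_real]
    exact norm_inner_le_norm _ _
  let F' : EuclideanSpace ℝ (Fin n) → EuclideanSpace ℝ (Fin n) →
      EuclideanSpace ℝ (Fin n) →L[ℝ] ℂ :=
    fun z ξ => f ξ • (Complex.exp (Complex.I * (⟪z, ξ⟫ : ℝ)) • (Complex.I • L ξ))
  have hF'n : ∀ z ξ, ‖F' z ξ‖ ≤ W ξ := by
    intro z ξ
    simp only [F', norm_smul, norm_cexp_I, Complex.norm_I, one_mul]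
    exact (mul_le_mul_of_nonneg_left (hLn ξ) (norm_nonneg _)).trans (b1 ξ)
  have hF'c : Continuous (F' z) := by
    have c2 : Continuous (fun ξ : EuclideanSpace ℝ (Fin n) =>
      Complex.exp (Complex.I * (⟪z, ξ⟫ : ℝ))) := by fun_prop
    exact hf.smul (c2.smul (hLc.const_smul Complex.I))
  refine ⟨∫ ξ, F' z ξ, norm_integral_le_of_norm_le hW (Filter.Eventually.of_forall (hF'n z)), ?_⟩
  refine hasFDerivAt_integral_of_dominated_of_fderiv_le (𝕜 := ℝ) (F' := F') (bound := W)
    (s := Set.univ) Filter.univ_mem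
    (Filter.Eventually.of_forall fun z => (cz z).aestronglyMeasurable)
    (hW.mono' (cz z).aestronglyMeasurable (Filter.Eventually.of_forall (bz z)))
    hF'c.aestronglyMeasurable
    (Filter.Eventually.of_forall fun ξ z _ => hF'n z ξ) hW
    (Filter.Eventually.of_forall fun ξ z _ => ?_)
  have hL : HasFDerivAt (fun z : EuclideanSpace ℝ (Fin n) => ((⟪z, ξ⟫ : ℝ) : ℂ)) (L ξ) z := by
    refine (L ξ).hasFDerivAt.congr_of_eventuallyEq (Filter.Eventually.of_forall fun y => ?_)
    simp [L, real_inner_comm]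
  exact ((hL.const_mul Complex.I).cexp).const_mul (f ξ)

/-- with `0 < η ≤ c/(48n)`, the rescaled frequency-truncated approximation
`q_{i,c}(x) = q^c_η(ηx)` of `q_i = Q_i e^{-‖x‖²/2}` satisfies
`‖q_{i,c} − q_i(η·)‖_∞ ≤ 36 e^{−72n²}` and
`‖∂_k q_{i,c} − η(∂_k q_i)(η·)‖_∞ ≤ 36 η e^{−72n²}`. -/
theorem stmt17 (n i : ℕ) (hn : 1 ≤ n) (hi : i < n)
    (c η : ℝ) (hc : 0 < c) (hη : 0 < η) (hηc : η ≤ c / (48 * n))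
    (χ : EuclideanSpace ℝ (Fin n) → ℝ) (hχ : ContDiff ℝ (⊤ : ℕ∞) χ)
    (hχ01 : ∀ ξ, χ ξ ∈ Set.Icc (0:ℝ) 1)
    (hχsupp : tsupport χ ⊆ Metric.closedBall 0 c)
    (hχ1 : ∀ ξ ∈ Metric.closedBall (0 : EuclideanSpace ℝ (Fin n)) (c / 2), χ ξ = 1)
    (q : EuclideanSpace ℝ (Fin n) → ℝ)
    (hq : q = fun p =>
      (((∑ j ∈ Finset.univ.filter (fun j : Fin n => (j : ℕ) < i + 1), p j ^ 2) - 2) ^ 2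
        + (∑ j ∈ Finset.univ.filter (fun j : Fin n => i + 1 ≤ (j : ℕ)), p j ^ 2) - 1) *
        Real.exp (-‖p‖ ^ 2 / 2))
    (qcη qic : EuclideanSpace ℝ (Fin n) → ℂ)
    (hqcη : qcη = fun z => (1 / (2 * Real.pi) ^ n) *
      ∫ ξ : EuclideanSpace ℝ (Fin n),
        (χ (η • ξ) : ℂ) * Fn (fun y => (q y : ℂ)) ξ * Complex.exp (Complex.I * (⟪z, ξ⟫ : ℝ)))
    (hqic : qic = fun x => qcη (η • x)) :
    (∀ x, ‖qic x - (q (η • x) : ℂ)‖ ≤ 36 * Real.exp (-72 * (n : ℝ) ^ 2)) ∧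
    (∀ (k : Fin n) (x : EuclideanSpace ℝ (Fin n)),
      ‖fderiv ℝ qic x (EuclideanSpace.single k 1)
          - ((η * fderiv ℝ q (η • x) (EuclideanSpace.single k 1) : ℝ) : ℂ)‖
        ≤ 36 * η * Real.exp (-72 * (n : ℝ) ^ 2)) := by
  have hq' : q = qq n i := hq
  subst hq'
  have hn1 : (1 : ℝ) ≤ n := by exact_mod_cast hn
  set s : ℝ := Real.sqrt (2 * Real.pi) ^ n with hs
  have hs0 : 0 < s := by positivity
  have hss : s * s = (2 * Real.pi) ^ n := by
    rw [hs, ← mul_pow, Real.mul_self_sqrt (by positivity)]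
  have h2n : 0 < Real.sqrt 2 ^ n := by positivity
  set F : EuclideanSpace ℝ (Fin n) → ℂ := Fn (fun y => (qq n i y : ℂ)) with hF
  set C : ℝ := 36 * Real.exp (-72 * (n : ℝ) ^ 2) with hC
  have hC0 : 0 < C := by positivity
  let W : EuclideanSpace ℝ (Fin n) → ℝ :=
    fun ξ => (C * s / Real.sqrt 2 ^ n) * Real.exp (-(1 / 4) * ‖ξ‖ ^ 2)
  have hW : MeasureTheory.Integrable W := (gauss_int n).const_mul _
  have hWval : ∫ ξ, W ξ = C * (2 * Real.pi) ^ n := by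
    simp only [W]
    rw [MeasureTheory.integral_const_mul, gauss_val, ← hss, ← hs]
    field_simp
  let f : EuclideanSpace ℝ (Fin n) → ℂ := fun ξ => ((χ (η • ξ) - 1 : ℝ) : ℂ) * F ξ
  have hFc : Continuous F := Fn_cont (qq_int n i)
  have hχc : Continuous χ := hχ.continuous
  have hf : Continuous f := by fun_prop
  have hfW : ∀ ξ, ‖f ξ‖ * (1 + ‖ξ‖) ≤ W ξ := by
    intro ξ
    by_cases hξ : ‖η • ξ‖ ≤ c / 2
    · have : χ (η • ξ) = 1 := hχ1 _ (by simpa using hξ)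
      simp only [f, this, sub_self, Complex.ofReal_zero, zero_mul, norm_zero, W]
      positivity
    · rw [norm_smul, Real.norm_of_nonneg hη.le, not_le] at hξ
      have hr : 24 * n ≤ ‖ξ‖ := by
        rw [le_div_iff₀ (by positivity)] at hηc
        have : η * (24 * n) ≤ η * ‖ξ‖ := by nlinarith
        exact le_of_mul_le_mul_left this hη
      have h1 := num_bound n hn ‖ξ‖ hr
      have h2 : ‖F ξ‖ ≤ _ := Fn_qq_bound n i hn ξ
      have h3 : ‖((χ (η • ξ) - 1 : ℝ) : ℂ)‖ ≤ 1 := by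
        rw [Complex.norm_real, Real.norm_eq_abs, abs_le]
        have := hχ01 (η • ξ)
        constructor <;> linarith [this.1, this.2]
      calc ‖f ξ‖ * (1 + ‖ξ‖) = ‖((χ (η • ξ) - 1 : ℝ) : ℂ)‖ * ‖F ξ‖ * (1 + ‖ξ‖) := by
            simp only [f, norm_mul]
        _ ≤ 1 * ((s * Real.exp (-‖ξ‖ ^ 2 / 2)) * (3 * n ^ 2 * (3 + ‖ξ‖ ^ 2) ^ 2))
            * (1 + ‖ξ‖) := by gcongr
        _ = (s / Real.sqrt 2 ^ n) * (3 * n ^ 2 * (3 + ‖ξ‖ ^ 2) ^ 2 * (1 + ‖ξ‖)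
            * Real.exp (-‖ξ‖ ^ 2 / 2) * Real.sqrt 2 ^ n) := by
            field_simp
        _ ≤ (s / Real.sqrt 2 ^ n) * (C * Real.exp (-(1 / 4) * ‖ξ‖ ^ 2)) := by gcongr
        _ = W ξ := by simp only [W]; ring
  let E : EuclideanSpace ℝ (Fin n) → ℂ := fun z => (1 / (2 * Real.pi) ^ n : ℂ) *
    ∫ ξ, f ξ * Complex.exp (Complex.I * (⟪z, ξ⟫ : ℝ))
  have hpre : ‖(1 / (2 * Real.pi) ^ n : ℂ)‖ = ((2 * Real.pi) ^ n)⁻¹ := by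
    rw [one_div, norm_inv, norm_pow, norm_mul, Complex.norm_real,
      Real.norm_of_nonneg Real.pi_pos.le]
    norm_num
  have hpos : 0 < (2 * Real.pi) ^ n := by positivity
  have hEq : ∀ z, qcη z = E z + (qq n i z : ℂ) := by
    intro z
    have hFi : MeasureTheory.Integrable
        (fun ξ => F ξ * Complex.exp (Complex.I * (⟪z, ξ⟫ : ℝ))) := by
      refine (Fn_qq_int n i hn).mul_bdd (c := 1) ?_ ?_
      · exact Continuous.aestronglyMeasurable (by fun_prop)
      · exact Filter.Eventually.of_forall fun x => (norm_cexp_I _).le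
    have hfi : MeasureTheory.Integrable
        (fun ξ => f ξ * Complex.exp (Complex.I * (⟪z, ξ⟫ : ℝ))) := by
      refine hW.mono' (Continuous.aestronglyMeasurable (by fun_prop))
        (Filter.Eventually.of_forall fun ξ => ?_)
      rw [norm_mul, norm_cexp_I, mul_one]
      nlinarith [hfW ξ, mul_nonneg (norm_nonneg (f ξ)) (norm_nonneg ξ)]
    rw [qq_inversion n i hn z, hqcη]
    simp only [E]
    rw [← mul_add, ← MeasureTheory.integral_add hfi hFi]
    congr 2
    ext ξ
    simp only [f]
    push_cast
    ring
  constructor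
  · intro x
    rw [hqic]
    simp only [hEq, add_sub_cancel_right, E]
    rw [norm_mul, hpre]
    have := (osc_deriv f hf W hW hfW (η • x)).1
    rw [hWval] at this
    calc _ ≤ ((2 * Real.pi) ^ n)⁻¹ * (C * (2 * Real.pi) ^ n) := by gcongr
      _ = C := by field_simp
  · intro k x
    obtain ⟨D, hDn, hD⟩ := (osc_deriv f hf W hW hfW (η • x)).2
    rw [hWval] at hDn
    have hE : HasFDerivAt E ((1 / (2 * Real.pi) ^ n : ℂ) • D) (η • x) := hD.const_mul _
    have hqd : HasFDerivAt (qq n i) (fderiv ℝ (qq n i) (η • x)) (η • x) :=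
      ((qq_contDiff n i).differentiable (by norm_num) _).hasFDerivAt
    have hqd' : HasFDerivAt (fun z => (qq n i z : ℂ))
        (Complex.ofRealCLM.comp (fderiv ℝ (qq n i) (η • x))) (η • x) :=
      (Complex.ofRealCLM.hasFDerivAt).comp (η • x) hqd
    have hsm : HasFDerivAt (fun x : EuclideanSpace ℝ (Fin n) => η • x)
        (η • ContinuousLinearMap.id ℝ (EuclideanSpace ℝ (Fin n))) x :=
      (hasFDerivAt_id x).const_smul η
    have hqic' : qic = (fun z => E z + (qq n i z : ℂ)) ∘ (fun x => η • x) := by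
      rw [hqic]; ext x; exact hEq _
    have hfin := (hE.add hqd').comp x hsm
    have hfd : fderiv ℝ qic x = ((1 / (2 * Real.pi) ^ n : ℂ) • D
        + Complex.ofRealCLM.comp (fderiv ℝ (qq n i) (η • x))).comp
        (η • ContinuousLinearMap.id ℝ (EuclideanSpace ℝ (Fin n))) := by
      rw [hqic']; exact hfin.fderiv
    rw [hfd]
    have hval : (((1 / (2 * Real.pi) ^ n : ℂ) • D
        + Complex.ofRealCLM.comp (fderiv ℝ (qq n i) (η • x))).comp
        (η • ContinuousLinearMap.id ℝ (EuclideanSpace ℝ (Fin n)))) (EuclideanSpace.single k 1)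
        - ((η * fderiv ℝ (qq n i) (η • x) (EuclideanSpace.single k 1) : ℝ) : ℂ)
        = (η : ℂ) * ((1 / (2 * Real.pi) ^ n : ℂ) * D (EuclideanSpace.single k 1)) := by
      simp only [ContinuousLinearMap.comp_apply, ContinuousLinearMap.add_apply,
        ContinuousLinearMap.smul_apply, ContinuousLinearMap.id_apply, map_smul,
        Complex.ofRealCLM_apply, smul_eq_mul, Complex.real_smul]
      push_cast
      ring
    rw [hval, norm_mul, norm_mul, hpre, Complex.norm_real, Real.norm_of_nonneg hη.le]
    have hDk : ‖D (EuclideanSpace.single k 1)‖ ≤ C * (2 * Real.pi) ^ n := by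
      refine (D.le_opNorm _).trans ?_
      rw [EuclideanSpace.norm_single, norm_one, mul_one]
      exact hDn
    calc _ ≤ η * (((2 * Real.pi) ^ n)⁻¹ * (C * (2 * Real.pi) ^ n)) := by gcongr
      _ = η * C := by field_simp
      _ = _ := by rw [hC]; ring

end
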